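/- arXiv:1208.2846 — 5 statements merged into one kernel-verified Lean document; each statement's English description precedes it below -/
import Mathlib

section
/- Any cell-probe data structure with word size w that solves the indexing problem on k binary strings of length n using a non-adaptive query algorithm with query time t_q and an (arbitrary, possibly adaptive) update algorithm with update time t_u must satisfy k·n ≤ (k·t_q + n·t_u)·w. In particular, either t_q = Ω(n/w) or t_u = Ω(k/w), regardless of preprocessing time and space usage. -/
/-- A memory state with word size `w`: each of the `2^w` cell addresses stores a `w`-bit word. -/
abbrev Memory (w : ℕ) := Fin (2 ^ w) → BitVec w

/-- Execute the first `k` steps of an adaptive update operation with `t` steps, given by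
address functions `addr` (mapping the words read at previous steps to the next probed
address) and write functions `wr` (mapping the words read so far, including the current
step, to the word overwriting the probed cell).  Returns the resulting memory together
with the sequence of words read (each as it was when the step read the cell, before the
overwrite). -/
def runUpdateAux (w t : ℕ)
    (addr : (s : Fin t) → (Fin s.val → BitVec w) → Fin (2 ^ w))
    (wr : (s : Fin t) → (Fin (s.val + 1) → BitVec w) → BitVec w) :
    (k : ℕ) → k ≤ t → Memory w → Memory w × (Fin k → BitVec w)
  | 0, _, M => (M, fun i => i.elim0)
  | k + 1, h, M =>
    let prev := runUpdateAux w t addr wr k (Nat.le_of_succ_le h) M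
    let s : Fin t := ⟨k, h⟩
    let a : Fin (2 ^ w) := addr s prev.2
    let reads' : Fin (k + 1) → BitVec w := Fin.snoc prev.2 (prev.1 a)
    (Function.update prev.1 a (wr s reads'), reads')

/-- The memory resulting from executing all `t` steps of an adaptive update operation. -/
def runUpdate (w t : ℕ)
    (addr : (s : Fin t) → (Fin s.val → BitVec w) → Fin (2 ^ w))
    (wr : (s : Fin t) → (Fin (s.val + 1) → BitVec w) → BitVec w)
    (M : Memory w) : Memory w :=
  (runUpdateAux w t addr wr t le_rfl M).1

/-- Executing a finite sequence of adaptive update operations in order, where update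
`j : Fin n` has address functions `uaddr j` and write functions `uwr j`. -/
def runUpdates (w n t : ℕ)
    (uaddr : Fin n → (s : Fin t) → (Fin s.val → BitVec w) → Fin (2 ^ w))
    (uwr : Fin n → (s : Fin t) → (Fin (s.val + 1) → BitVec w) → BitVec w)
    (js : List (Fin n)) (M : Memory w) : Memory w :=
  js.foldl (fun M j => runUpdate w t (uaddr j) (uwr j) M) M

theorem runUpdateAux_agree (w t : ℕ)
    (addr : (s : Fin t) → (Fin s.val → BitVec w) → Fin (2 ^ w))
    (wr : (s : Fin t) → (Fin (s.val + 1) → BitVec w) → BitVec w)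
    (U : Set (Fin (2 ^ w))) (M M' : Memory w) (hM : ∀ c ∈ U, M c = M' c) :
    ∀ (k : ℕ) (hk : k ≤ t),
      (runUpdateAux w t addr wr k hk M).2 = (runUpdateAux w t addr wr k hk M').2 →
      ∀ c ∈ U, (runUpdateAux w t addr wr k hk M).1 c = (runUpdateAux w t addr wr k hk M').1 c := by
  intro k
  induction k with
  | zero => intro hk _ c hc; exact hM c hc
  | succ k ih =>
    intro hk hr c hc
    have hr0 := hr
    simp only [runUpdateAux] at hr
    have h2 := congrArg Fin.init hr
    rw [Fin.init_snoc, Fin.init_snoc] at h2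
    have h1 := ih (Nat.le_of_succ_le hk) h2 c hc
    simp only [runUpdateAux]
    rw [hr, h2]
    simp only [Function.update_apply]
    rw [h1]

/-- Any cell-probe data structure with word size `w` solving the indexing problem on `k`
binary strings of length `n`, using a non-adaptive query algorithm `(Q, ans)` with query
time `t_q` (query `i` probes the at most `t_q` cells of `Q i` and answers a function of
their contents) and an adaptive update algorithm `(uaddr, uwr)` with update time `t_u`,
must satisfy `k * n ≤ (k * t_q + n * t_u) * w`; in particular either `t_q = Ω(n/w)` or
`t_u = Ω(k/w)`. -/
theorem indexing_nonadaptive_query_lb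
    (w n k t_q t_u : ℕ)
    (Q : Fin k → Finset (Fin (2 ^ w)))
    (hQ : ∀ i, (Q i).card ≤ t_q)
    (ans : (i : Fin k) → (↥(Q i) → BitVec w) → Bool)
    (uaddr : Fin n → (s : Fin t_u) → (Fin s.val → BitVec w) → Fin (2 ^ w))
    (uwr : Fin n → (s : Fin t_u) → (Fin (s.val + 1) → BitVec w) → BitVec w)
    (P : (Fin k → Fin n → Bool) → Memory w)
    (hsolve : ∀ (S : Fin k → Fin n → Bool) (js : List (Fin n)) (hjs : js ≠ [])
      (i : Fin k),
      ans i (fun c => runUpdates w n t_u uaddr uwr js (P S) c.val)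
        = S i (js.getLast hjs)) :
    k * n ≤ (k * t_q + n * t_u) * w := by
  classical
  let enc : (Fin k → Fin n → Bool) →
      ((i : Fin k) → ↥(Q i) → BitVec w) × (Fin n → Fin t_u → BitVec w) :=
    fun S => (fun i c => P S c.val,
      fun j => (runUpdateAux w t_u (uaddr j) (uwr j) t_u le_rfl (P S)).2)
  have hinj : Function.Injective enc := by
    intro S S' h
    have hq := congrArg Prod.fst h
    have hu := congrArg Prod.snd h
    funext i j
    have e1 := hsolve S [j] (by simp) i
    have e2 := hsolve S' [j] (by simp) i
    simp only [List.getLast_singleton] at e1 e2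
    rw [← e1, ← e2]
    congr 1
    funext c
    exact runUpdateAux_agree w t_u (uaddr j) (uwr j) {c | c ∈ Q i} (P S) (P S')
      (fun c hc => congrFun (congrFun hq i) ⟨c, hc⟩) t_u le_rfl (congrFun hu j) c.val c.2
  have e : BitVec w ≃ Fin (2 ^ w) := ⟨BitVec.toFin, BitVec.ofFin, fun _ => rfl, fun _ => rfl⟩
  have hc := Nat.card_le_card_of_injective enc hinj
  have hb : Nat.card (BitVec w) = 2 ^ w := by rw [Nat.card_congr e]; simp
  have hprod : ∏ i : Fin k, (2 ^ w) ^ (Q i).card ≤ ((2 ^ w) ^ t_q) ^ k := by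
    calc _ ≤ ∏ _i : Fin k, (2 ^ w) ^ t_q :=
          Finset.prod_le_prod' fun i _ => Nat.pow_le_pow_right (by positivity) (hQ i)
      _ = _ := by simp
  have hc2 : (2 ^ n) ^ k ≤ (∏ i : Fin k, (2 ^ w) ^ (Q i).card) * ((2 ^ w) ^ t_u) ^ n := by
    rw [Nat.card_eq_fintype_card] at hb
    simpa [Nat.card_prod, Nat.card_pi, hb] using hc
  have hc3 := hc2.trans (Nat.mul_le_mul_right _ hprod)
  simp only [← pow_mul, ← pow_add] at hc3
  have := (Nat.pow_le_pow_iff_right (by norm_num)).1 hc3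
  nlinarith [this]
end

section
/- Any cell-probe data structure with word size w that solves the set disjointness problem on universe [n] using a memoryless update algorithm and an (arbitrary, possibly adaptive) query algorithm with query time t_q must satisfy n ≤ 3·t_q·w; in particular t_q = Ω(n/w), regardless of the preprocessing time, space usage and update time. -/
/-- Executing a single memoryless update `x`: cell `c` is mapped through `g x c` if
`c` belongs to the probe set `U x`, and is left unchanged otherwise. -/
def memStep (w n : ℕ) (U : Fin n → Finset (Fin (2 ^ w)))
    (g : Fin n → Fin (2 ^ w) → BitVec w → BitVec w)
    (x : Fin n) (M : Memory w) : Memory w :=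
  fun c => if c ∈ U x then g x c (M c) else M c

/-- Executing a finite sequence of memoryless updates in order. -/
def memExec (w n : ℕ) (U : Fin n → Finset (Fin (2 ^ w)))
    (g : Fin n → Fin (2 ^ w) → BitVec w → BitVec w)
    (xs : List (Fin n)) (M : Memory w) : Memory w :=
  xs.foldl (fun M x => memStep w n U g x M) M

/-- The sequence of words read by an adaptive query algorithm with address functions `addr`
on memory `M`: at step `s` it reads the cell whose address is determined by the words read
at the previous steps. -/
def queryReads (w t : ℕ) (M : Memory w)
    (addr : (s : Fin t) → (Fin s.val → BitVec w) → Fin (2 ^ w)) :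
    Fin t → BitVec w
  | s => M (addr s (fun j => queryReads w t M addr ⟨j.val, j.isLt.trans s.isLt⟩))
  termination_by s => s.val

/-- Memoryless updates act cell by cell. -/
theorem memExec_local (w n : ℕ) (U : Fin n → Finset (Fin (2 ^ w)))
    (g : Fin n → Fin (2 ^ w) → BitVec w → BitVec w)
    (c : Fin (2 ^ w)) (xs : List (Fin n)) : ∀ M M' : Memory w, M c = M' c →
      memExec w n U g xs M c = memExec w n U g xs M' c := by
  induction xs with
  | nil => intro M M' h; simpa [memExec] using h
  | cons x xs ih =>
    intro M M' h
    exact ih (memStep w n U g x M) (memStep w n U g x M') (by simp [memStep, h])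

/-- If two memories agree on all cells probed on the first, the reads coincide. -/
theorem queryReads_congr (w t : ℕ) (M M' : Memory w)
    (addr : (s : Fin t) → (Fin s.val → BitVec w) → Fin (2 ^ w))
    (h : ∀ s : Fin t,
      M (addr s (fun j => queryReads w t M addr ⟨j.val, j.isLt.trans s.isLt⟩))
      = M' (addr s (fun j => queryReads w t M addr ⟨j.val, j.isLt.trans s.isLt⟩))) :
    queryReads w t M addr = queryReads w t M' addr := by
  have key : ∀ k : ℕ, ∀ hk : k < t,
      queryReads w t M addr ⟨k, hk⟩ = queryReads w t M' addr ⟨k, hk⟩ := by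
    intro k
    induction k using Nat.strong_induction_on with
    | _ k ih =>
      intro hk
      have e : (fun j : Fin k => queryReads w t M addr ⟨j.val, j.isLt.trans hk⟩)
          = (fun j : Fin k => queryReads w t M' addr ⟨j.val, j.isLt.trans hk⟩) := by
        funext j
        exact ih j.val j.isLt _
      rw [queryReads, queryReads]
      have h2 := h ⟨k, hk⟩
      simp only at h2
      rw [h2]
      exact congrArg (fun z => M' (addr ⟨k, hk⟩ z)) e
  funext s
  exact key s.val s.isLt

/-- Any cell-probe data structure with word size `w` solving set disjointness on universe
`[n]` with a memoryless update algorithm `(U, g)` and an adaptive query algorithm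
`(addr, ans)` with query time `t_q` must satisfy `n ≤ 3 * t_q * w`. -/
theorem set_disjointness_memoryless_lb
    (w n t_q : ℕ)
    (U : Fin n → Finset (Fin (2 ^ w)))
    (g : Fin n → Fin (2 ^ w) → BitVec w → BitVec w)
    (addr : (s : Fin t_q) → (Fin s.val → BitVec w) → Fin (2 ^ w))
    (ans : (Fin t_q → BitVec w) → Bool)
    (P : Finset (Fin n) → Memory w)
    (hsolve : ∀ S T : Finset (Fin n),
      ans (queryReads w t_q (memExec w n U g (T.sort (· ≤ ·)) (P S)) addr)
        = decide (S ∩ T = ∅)) :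
    n ≤ 3 * t_q * w := by
  classical
  let R : Finset (Fin n) → (Fin t_q → BitVec w) := fun S =>
    queryReads w t_q (memExec w n U g (Sᶜ.sort (· ≤ ·)) (P S)) addr
  let f : Finset (Fin n) → (Fin t_q → BitVec w) × (Fin t_q → BitVec w) := fun S =>
    (R S, fun s => P S (addr s (fun j => R S ⟨j.val, j.isLt.trans s.isLt⟩)))
  have sub : ∀ S S' : Finset (Fin n), f S = f S' → S' ⊆ S := by
    intro S S' h
    have h1 : R S = R S' := congrArg Prod.fst h
    have h2 : ∀ s : Fin t_q, P S (addr s (fun j => R S ⟨j.val, j.isLt.trans s.isLt⟩))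
        = P S' (addr s (fun j => R S ⟨j.val, j.isLt.trans s.isLt⟩)) := by
      intro s
      have := congrFun (congrArg Prod.snd h) s
      simp only [f] at this
      rw [this, h1]
    have h3 := queryReads_congr w t_q (memExec w n U g (Sᶜ.sort (· ≤ ·)) (P S))
      (memExec w n U g (Sᶜ.sort (· ≤ ·)) (P S')) addr
      (fun s => memExec_local w n U g _ _ _ _ (h2 s))
    have h4 := hsolve S Sᶜ
    rw [h3, hsolve S' Sᶜ] at h4
    have h5 : S' ∩ Sᶜ = ∅ := by simpa using h4
    intro x hx
    by_contra hn
    have : x ∈ S' ∩ Sᶜ := by simp [hx, hn]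
    simp [h5] at this
  have inj : Function.Injective f := fun S S' h =>
    Finset.Subset.antisymm (sub S' S h.symm) (sub S S' h)
  let e : BitVec w ≃ Fin (2 ^ w) :=
    ⟨BitVec.toFin, BitVec.ofFin, fun _ => rfl, fun _ => rfl⟩
  let F : Finset (Fin n) → (Fin t_q → Fin (2 ^ w)) × (Fin t_q → Fin (2 ^ w)) := fun S =>
    (fun s => e ((f S).1 s), fun s => e ((f S).2 s))
  have injF : Function.Injective F := by
    intro S S' h
    apply inj
    have ha := congrArg Prod.fst h
    have hb := congrArg Prod.snd h
    exact Prod.ext (funext fun s => e.injective (congrFun ha s))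
      (funext fun s => e.injective (congrFun hb s))
  have hc := Fintype.card_le_of_injective F injF
  simp only [Fintype.card_finset, Fintype.card_prod, Fintype.card_fun, Fintype.card_fin] at hc
  rw [← pow_mul, ← pow_add] at hc
  have := (Nat.pow_le_pow_iff_right (by norm_num : 1 < 2)).1 hc
  nlinarith [Nat.zero_le (t_q * w)]
end

section
/- Any depth-2 circuit C (with unbounded fan-in and fan-out and arbitrary gate functions) that computes the multiplication of two q×q matrices over GF(2) has size (number of wires) s(C) ≥ q³. (Writing n = q² for the number of entries per matrix, this is the bound s(C) ≥ n^{3/2}.) -/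
/-- A depth-2 circuit with input index type `I` and output index type `O`: a finite type `G`
of interior gates; each gate `g` reads the inputs in the finite set `S g` and computes an
arbitrary function `f g` of them; each output `o` reads the gates in the finite set `T o`
and computes an arbitrary function `h o` of their values.  Gates have unbounded fan-in and
fan-out. -/
structure Depth2Circuit (I O : Type) where
  G : Type
  [fintypeG : Fintype G]
  S : G → Finset I
  f : (g : G) → (↥(S g) → ZMod 2) → ZMod 2
  T : O → Finset G
  h : (o : O) → (↥(T o) → ZMod 2) → ZMod 2

attribute [instance] Depth2Circuit.fintypeG

/-- The value computed by interior gate `g` on input `x`. -/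
def Depth2Circuit.gateOut {I O : Type} (C : Depth2Circuit I O)
    (x : I → ZMod 2) (g : C.G) : ZMod 2 :=
  C.f g (fun i => x i.val)

/-- The value of output `o` on input `x`. -/
def Depth2Circuit.out {I O : Type} (C : Depth2Circuit I O)
    (x : I → ZMod 2) (o : O) : ZMod 2 :=
  C.h o (fun g => C.gateOut x g.val)

/-- The size of a depth-2 circuit: the total number of wires. -/
def Depth2Circuit.size {I O : Type} [Fintype O] (C : Depth2Circuit I O) : ℕ :=
  (∑ g : C.G, (C.S g).card) + (∑ o : O, (C.T o).card)

/-- The input index type for `q × q` matrix multiplication: `Sum.inl (i, j)` indexes the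
entry `A i j` of the first matrix, `Sum.inr (k, l)` the entry `B k l` of the second. -/
abbrev MMInput (q : ℕ) := (Fin q × Fin q) ⊕ (Fin q × Fin q)

/-- The input assignment encoding a pair of matrices `A, B`. -/
def mmInput {q : ℕ} (A B : Matrix (Fin q) (Fin q) (ZMod 2)) : MMInput q → ZMod 2 :=
  Sum.elim (fun ij => A ij.1 ij.2) (fun kl => B kl.1 kl.2)

/-- A depth-2 circuit computes `q × q` matrix multiplication over `GF(2)` if on every pair
of input matrices `A, B`, the output indexed by `(i, ℓ)` equals `(A * B) i ℓ`. -/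
def ComputesMM {q : ℕ} (C : Depth2Circuit (MMInput q) (Fin q × Fin q)) : Prop :=
  ∀ A B : Matrix (Fin q) (Fin q) (ZMod 2), ∀ i ℓ : Fin q,
    C.out (mmInput A B) (i, ℓ) = (A * B) i ℓ

/-- The matrix whose only possibly nonzero entry is in row `i`, at the column given by `o`. -/
def rowMat {q : ℕ} (i : Fin q) (o : Option (Fin q)) : Matrix (Fin q) (Fin q) (ZMod 2) :=
  fun a b => if a = i ∧ o = some b then 1 else 0

theorem rowMat_mul {q : ℕ} (i j l : Fin q) (B : Matrix (Fin q) (Fin q) (ZMod 2)) :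
    (rowMat i (some j) * B) i l = B j l := by
  simp [Matrix.mul_apply, rowMat]

theorem gateOut_rowMat {q : ℕ} (C : Depth2Circuit (MMInput q) (Fin q × Fin q))
    (i j : Fin q) (g : C.G) (hg : Sum.inl (i, j) ∉ C.S g)
    (B : Matrix (Fin q) (Fin q) (ZMod 2)) :
    C.gateOut (mmInput (rowMat i (some j)) B) g = C.gateOut (mmInput (rowMat i none) B) g := by
  unfold Depth2Circuit.gateOut
  congr 1
  funext ⟨x, hx⟩
  rcases x with ⟨a, b⟩ | ⟨a, b⟩
  · simp only [mmInput, rowMat, Sum.elim_inl]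
    have : ¬ (a = i ∧ some j = some b) := by
      rintro ⟨rfl, h⟩
      cases h
      exact hg hx
    rw [if_neg this]
    simp
  · rfl

open Classical in
theorem row_bound {q : ℕ} (C : Depth2Circuit (MMInput q) (Fin q × Fin q))
    (hC : ComputesMM C) (i : Fin q) :
    q * q ≤ (∑ g : C.G, Fintype.card {j : Fin q // Sum.inl (i, j) ∈ C.S g})
      + ∑ l : Fin q, (C.T (i, l)).card := by
  let U : Finset C.G := Finset.univ.biUnion fun l : Fin q => C.T (i, l)
  let K := Σ g : U, Option {j : Fin q // Sum.inl (i, j) ∈ C.S g.1}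
  let Φ : (Fin q × Fin q → ZMod 2) → (K → ZMod 2) := fun B k =>
    C.gateOut (mmInput (rowMat i (k.2.map Subtype.val)) (fun a b => B (a, b))) k.1.1
  have hΦ : Function.Injective Φ := by
    intro B B' h
    funext ⟨j, l⟩
    have h1 := hC (rowMat i (some j)) (fun a b => B (a, b)) i l
    have h2 := hC (rowMat i (some j)) (fun a b => B' (a, b)) i l
    have h1 := h1.trans (rowMat_mul i j l _)
    have h2 := h2.trans (rowMat_mul i j l _)
    refine h1.symm.trans (Eq.trans ?_ h2)
    unfold Depth2Circuit.out
    congr 1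
    funext ⟨g, hg⟩
    have hU : g ∈ U := Finset.mem_biUnion.2 ⟨l, Finset.mem_univ _, hg⟩
    by_cases hj : Sum.inl (i, j) ∈ C.S g
    · exact congrFun h ⟨⟨g, hU⟩, some ⟨j, hj⟩⟩
    · exact (gateOut_rowMat C i j g hj _).trans
        (Eq.trans (congrFun h ⟨⟨g, hU⟩, none⟩) (gateOut_rowMat C i j g hj _).symm)
  have hcard := Fintype.card_le_of_injective Φ hΦ
  rw [Fintype.card_fun, Fintype.card_fun, ZMod.card] at hcard
  have h3 := (Nat.pow_le_pow_iff_right (by norm_num : 1 < 2)).1 hcard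
  rw [Fintype.card_prod, Fintype.card_fin] at h3
  refine h3.trans ?_
  simp only [K, Fintype.card_sigma, Fintype.card_option]
  rw [Finset.sum_add_distrib]
  refine Nat.add_le_add ?_ ?_
  · rw [Finset.sum_coe_sort U (fun g => Fintype.card {j : Fin q // Sum.inl (i, j) ∈ C.S g})]
    exact Finset.sum_le_sum_of_subset (Finset.subset_univ _)
  · simp only [Finset.sum_const, Finset.card_univ, Fintype.card_coe, smul_eq_mul, mul_one]
    exact Finset.card_biUnion_le

open Classical in
theorem sum_rows {q : ℕ} (S : Finset (MMInput q)) :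
    ∑ i : Fin q, Fintype.card {j : Fin q // Sum.inl (i, j) ∈ S} ≤ S.card := by
  rw [← Fintype.card_sigma, ← Fintype.card_coe S]
  refine Fintype.card_le_of_injective
    (fun p : (Σ i : Fin q, {j : Fin q // Sum.inl (i, j) ∈ S}) =>
      (⟨Sum.inl (p.1, p.2.1), p.2.2⟩ : S)) ?_
  rintro ⟨i, j, h⟩ ⟨i', j', h'⟩ e
  simp only [Subtype.mk.injEq, Sum.inl.injEq, Prod.mk.injEq] at e
  obtain ⟨rfl, rfl⟩ := e
  rfl

/-- Any depth-2 circuit (with unbounded fan-in/fan-out and arbitrary gate functions)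
computing the multiplication of two `q × q` matrices over `GF(2)` has at least `q ^ 3`
wires; with `n = q ^ 2` inputs per matrix this is the bound `s(C) ≥ n^{3/2}`. -/
theorem matrix_multiplication_wire_lb
    (q : ℕ) (C : Depth2Circuit (MMInput q) (Fin q × Fin q))
    (hC : ComputesMM C) :
    q ^ 3 ≤ C.size := by
  classical
  have h := Finset.sum_le_sum fun (i : Fin q) (_ : i ∈ Finset.univ) => row_bound C hC i
  rw [Finset.sum_add_distrib, Finset.sum_comm, ← Fintype.sum_prod_type'
    (f := fun i l => (C.T (i, l)).card)] at h
  simp only [Finset.sum_const, Finset.card_univ, Fintype.card_fin, smul_eq_mul] at h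
  calc q ^ 3 = q * (q * q) := by ring
    _ ≤ _ := h
    _ ≤ C.size := by
      unfold Depth2Circuit.size
      refine Nat.add_le_add (Finset.sum_le_sum fun g _ => ?_) le_rfl
      convert sum_rows (C.S g)
end

section
/- Let C be a depth-2 circuit computing the multiplication of two q×q matrices A, B over GF(2). For ℓ ∈ Fin q, let t_{u,ℓ} denote the number of wires leaving input nodes corresponding to entries B[k,ℓ] of the ℓ-th column of B (that is, t_{u,ℓ} = Σ_{g∈G} |S_g ∩ {B-entry (k,ℓ) : k ∈ Fin q}|), and let t_{q,ℓ} denote the number of wires entering output gates of the ℓ-th column of the product (that is, t_{q,ℓ} = Σ_{i∈Fin q} |T_{(i,ℓ)}|). Then for every ℓ ∈ Fin q, t_{u,ℓ} + t_{q,ℓ} ≥ q². -/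
/-- The inputs corresponding to the `ℓ`-th column of the matrix `B`. -/
def bColumn (q : ℕ) (ℓ : Fin q) : Finset (MMInput q) :=
  Finset.image (fun k => Sum.inr (k, ℓ)) Finset.univ

/-- For any depth-2 circuit computing `q × q` matrix multiplication over `GF(2)` and any
column index `ℓ`, the number `t_{u,ℓ}` of wires leaving input nodes of the `ℓ`-th column of
`B` plus the number `t_{q,ℓ}` of wires entering output gates of the `ℓ`-th column of the
product is at least `q ^ 2`. -/
theorem matrix_multiplication_column_wire_lb
    (q : ℕ) (C : Depth2Circuit (MMInput q) (Fin q × Fin q))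
    (hC : ComputesMM C) (ℓ : Fin q) :
    q ^ 2 ≤ (∑ g : C.G, (C.S g ∩ bColumn q ℓ).card)
      + (∑ i : Fin q, (C.T (i, ℓ)).card) := by
  classical
  let D : Type := (Σ g : C.G, ↥(C.S g ∩ bColumn q ℓ)) ⊕ (Σ i : Fin q, ↥(C.T (i, ℓ)))
  let F : Matrix (Fin q) (Fin q) (ZMod 2) → (D → ZMod 2) := fun A =>
    Sum.elim (fun p => C.gateOut (Function.update (mmInput A 0) p.2.val 1) p.1)
      (fun p => C.gateOut (mmInput A 0) p.2.val)
  have hupd : ∀ (A : Matrix (Fin q) (Fin q) (ZMod 2)) (k : Fin q),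
      Function.update (mmInput A 0) (Sum.inr (k, ℓ)) 1
        = mmInput A (Matrix.single k ℓ 1) := by
    intro A k
    funext x
    rcases x with x | ⟨a, b⟩
    · simp [mmInput]
    · by_cases h : a = k ∧ b = ℓ
      · obtain ⟨rfl, rfl⟩ := h
        simp [mmInput]
      · have h1 : ¬ (k = a ∧ ℓ = b) := fun h' => h ⟨h'.1.symm, h'.2.symm⟩
        have h2 : (Sum.inr (a, b) : MMInput q) ≠ Sum.inr (k, ℓ) := by
          simpa using h
        rw [Function.update_of_ne h2]
        simp [mmInput, Matrix.single, h1]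
  have hF : Function.Injective F := by
    intro A A' hAA
    ext i k
    have key : C.out (mmInput A (Matrix.single k ℓ 1)) (i, ℓ)
        = C.out (mmInput A' (Matrix.single k ℓ 1)) (i, ℓ) := by
      unfold Depth2Circuit.out
      congr 1
      funext g
      rw [← hupd, ← hupd]
      by_cases hg : (Sum.inr (k, ℓ) : MMInput q) ∈ C.S g.val
      · have hm : (Sum.inr (k, ℓ) : MMInput q) ∈ C.S g.val ∩ bColumn q ℓ := by
          simp [hg, bColumn]
        exact congrFun hAA (Sum.inl ⟨g.val, ⟨_, hm⟩⟩)
      · have hz : ∀ M : Matrix (Fin q) (Fin q) (ZMod 2),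
            C.gateOut (Function.update (mmInput M 0) (Sum.inr (k, ℓ)) 1) g.val
              = C.gateOut (mmInput M 0) g.val := by
          intro M
          unfold Depth2Circuit.gateOut
          congr 1
          funext x
          exact Function.update_of_ne (fun h => hg (by rw [← h]; exact x.2)) _ _
        rw [hz, hz]
        exact congrFun hAA (Sum.inr ⟨i, g⟩)
    rw [hC, hC] at key
    simpa using key
  let decD : DecidableEq D := Classical.decEq D
  let instD : Fintype D := inferInstanceAs (Fintype
    ((Σ g : C.G, ↥(C.S g ∩ bColumn q ℓ)) ⊕ (Σ i : Fin q, ↥(C.T (i, ℓ)))))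
  have hcard := Fintype.card_le_of_injective F hF
  have e1 : Fintype.card (Matrix (Fin q) (Fin q) (ZMod 2)) = 2 ^ (q ^ 2) := by
    rw [← Nat.card_eq_fintype_card]
    change Nat.card (Fin q → Fin q → ZMod 2) = _
    simp [Nat.card_eq_fintype_card, sq, pow_mul]
  have e2 : Fintype.card D = (∑ g : C.G, (C.S g ∩ bColumn q ℓ).card)
      + (∑ i : Fin q, (C.T (i, ℓ)).card) := by
    change Fintype.card (_ ⊕ _) = _
    simp only [Fintype.card_sum, Fintype.card_sigma, Fintype.card_coe]
  rw [e1, Fintype.card_fun, ZMod.card, e2] at hcard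
  exact (Nat.pow_le_pow_iff_right (by norm_num)).1 hcard
end

section
/- If there is a linear data structure for a linear operator F : (Fin n → ZMod 2) → (Fin m → ZMod 2) with query time t_q and update time t_u, then there exists a depth-2 linear circuit computing F whose size satisfies s(C) ≤ n·t_u + m·t_q. Concretely: if F(x) = Q.mulVec (U.mulVec x) for matrices U : Matrix (Fin r) (Fin n) (ZMod 2) and Q : Matrix (Fin m) (Fin r) (ZMod 2) such that every column of U has at most t_u nonzero entries and every row of Q has at most t_q nonzero entries, then there is a depth-2 linear circuit with interior gate set Fin r computing F whose number of wires is at most n·t_u + m·t_q. -/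
/-- If there is a linear data structure for a linear operator
`F : (Fin n → ZMod 2) → (Fin m → ZMod 2)` with `r` cells, given by an update matrix `U`
(each column having at most `t_u` nonzero entries, the cells flipped by the update) and a
query matrix `Q` (each row having at most `t_q` nonzero entries, the cells probed by the
query) with `F x = Q.mulVec (U.mulVec x)`, then there is a depth-2 linear circuit with
interior gate set `Fin r` computing `F` — given by input sets `S g ⊆ Fin n` of the gates
and gate sets `T j ⊆ Fin r` of the outputs, where gate `g` outputs `∑ i ∈ S g, x i` and
output `j` equals `∑ g ∈ T j, ∑ i ∈ S g, x i` — whose number of wires is at most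
`n * t_u + m * t_q`. -/
theorem linear_ds_to_linear_circuit
    (n m r t_u t_q : ℕ)
    (F : (Fin n → ZMod 2) → (Fin m → ZMod 2))
    (U : Matrix (Fin r) (Fin n) (ZMod 2))
    (Q : Matrix (Fin m) (Fin r) (ZMod 2))
    (hF : ∀ x, F x = Q.mulVec (U.mulVec x))
    (hU : ∀ i : Fin n, (Finset.univ.filter (fun c => U c i ≠ 0)).card ≤ t_u)
    (hQ : ∀ j : Fin m, (Finset.univ.filter (fun c => Q j c ≠ 0)).card ≤ t_q) :
    ∃ (S : Fin r → Finset (Fin n)) (T : Fin m → Finset (Fin r)),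
      (∀ (x : Fin n → ZMod 2) (j : Fin m),
        (∑ g ∈ T j, ∑ i ∈ S g, x i) = F x j) ∧
      (∑ g : Fin r, (S g).card) + (∑ j : Fin m, (T j).card) ≤ n * t_u + m * t_q := by
  have key : ∀ a b : ZMod 2, (if a ≠ 0 then b else 0) = a * b := by decide
  refine ⟨fun g => Finset.univ.filter (fun i => U g i ≠ 0),
    fun j => Finset.univ.filter (fun c => Q j c ≠ 0), ?_, ?_⟩
  · intro x j
    rw [hF]
    simp only [Finset.sum_filter, key, Matrix.mulVec, dotProduct]
  · refine Nat.add_le_add ?_ ?_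
    · have h : (∑ g : Fin r, (Finset.univ.filter (fun i => U g i ≠ 0)).card)
          = ∑ i : Fin n, (Finset.univ.filter (fun c => U c i ≠ 0)).card := by
        simp only [Finset.card_filter]
        exact Finset.sum_comm
      rw [h]
      exact (Finset.sum_le_sum (fun i _ => hU i)).trans (by simp)
    · exact (Finset.sum_le_sum (fun j _ => hQ j)).trans (by simp)
end
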